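/- arXiv:1305.5568 — 4 statements merged into one kernel-verified Lean document; each statement's English description precedes it below -/
import Mathlib

section
/- The expectation of the position satisfies lim_{n→∞} E(S_n)/n^{1/2} = √(2/π). -/
open Filter

lemma aux_formula (P : ℕ → ℕ → ℝ)
    (hinit : ∀ x : ℕ, P 1 x = if x = 1 then 1 else 0)
    (h0 : ∀ n : ℕ, 1 ≤ n → P (n + 1) 0 = (1 / 2) * P n 1)
    (h1 : ∀ n : ℕ, 1 ≤ n → P (n + 1) 1 = P n 0 + (1 / 2) * P n 2)
    (hx : ∀ n : ℕ, 1 ≤ n → ∀ x : ℕ, 2 ≤ x →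
      P (n + 1) x = (1 / 2) * P n (x - 1) + (1 / 2) * P n (x + 1)) (n : ℕ) (hn : 1 ≤ n) :
    ∀ m x : ℕ, (n + x = 2 * m → P n x = (if x = 0 then 1 else 2) * (n.choose m : ℝ) / 2 ^ n) ∧
      (n + x = 2 * m + 1 → P n x = 0) := by
  induction n, hn using Nat.le_induction with
  | base =>
    intro m x
    rw [hinit]
    refine ⟨fun h => ?_, fun h => ?_⟩
    · by_cases h' : x = 1
      · obtain rfl : m = 1 := by omega
        simp [h']
      · have : Nat.choose 1 m = 0 := Nat.choose_eq_zero_of_lt (by omega)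
        simp [h', this]
    · rw [if_neg (by omega)]
  | succ n hn ih =>
    intro m x
    refine ⟨fun h => ?_, fun h => ?_⟩
    · obtain ⟨m, rfl⟩ : ∃ k, m = k + 1 := ⟨m - 1, by omega⟩
      have hch : ((n + 1).choose (m + 1) : ℝ) = n.choose m + n.choose (m + 1) := by
        exact_mod_cast Nat.choose_succ_succ n m
      rcases Nat.lt_or_ge x 2 with hx2 | hx2
      · obtain rfl | rfl : x = 0 ∨ x = 1 := by omega
        · rw [h0 n hn, (ih (m + 1) 1).1 (by omega), hch]
          have : n.choose m = n.choose (m + 1) := Nat.choose_symm_of_eq_add (by omega)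
          rw [this]
          simp only [one_ne_zero, if_true, if_false]
          field_simp
          ring
        · rw [h1 n hn, (ih m 0).1 (by omega), (ih (m + 1) 2).1 (by omega), hch]
          simp
          field_simp
          ring
      · rw [hx n hn x hx2, (ih m (x - 1)).1 (by omega), (ih (m + 1) (x + 1)).1 (by omega), hch,
          if_neg (by omega), if_neg (by omega), if_neg (by omega)]
        field_simp
        ring
    · rcases Nat.lt_or_ge x 2 with hx2 | hx2
      · obtain rfl | rfl : x = 0 ∨ x = 1 := by omega
        · rw [h0 n hn, (ih m 1).2 (by omega)]
          simp
        · obtain ⟨m, rfl⟩ : ∃ k, m = k + 1 := ⟨m - 1, by omega⟩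
          rw [h1 n hn, (ih m 0).2 (by omega), (ih (m + 1) 2).2 (by omega)]
          simp
      · obtain ⟨m, rfl⟩ : ∃ k, m = k + 1 := ⟨m - 1, by omega⟩
        rw [hx n hn x hx2, (ih m (x - 1)).2 (by omega), (ih (m + 1) (x + 1)).2 (by omega)]
        simp

lemma aux_sum (f g : ℕ → ℝ) (h1 : g 1 = f 0 + (1 / 2) * f 2)
    (hx : ∀ x : ℕ, 2 ≤ x → g x = (1 / 2) * f (x - 1) + (1 / 2) * f (x + 1)) (N : ℕ) :
    ∑ x ∈ Finset.range (N + 2), (x : ℝ) * g x =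
      f 0 + ∑ x ∈ Finset.range (N + 2), (x : ℝ) * f x +
        ((N + 1) * f (N + 2) / 2 - (N + 2) * f (N + 1) / 2) := by
  induction N with
  | zero => simp [Finset.sum_range_succ, h1]; ring
  | succ N ih =>
    rw [show N + 1 + 2 = (N + 2) + 1 by ring, Finset.sum_range_succ, ih,
      Finset.sum_range_succ _ (N + 2), hx (N + 2) (by omega)]
    rw [show N + 2 - 1 = N + 1 by omega, show N + 1 + 1 = N + 2 by ring]
    push_cast
    ring

noncomputable def auxC (k : ℕ) : ℝ := (k.centralBinom : ℝ) / 4 ^ k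

lemma auxC_succ (k : ℕ) : (2 * k + 2) * auxC (k + 1) = (2 * k + 1) * auxC k := by
  have h : ((k : ℝ) + 1) * (k + 1).centralBinom = 2 * (2 * k + 1) * k.centralBinom := by
    exact_mod_cast Nat.succ_mul_centralBinom_succ k
  unfold auxC
  rw [pow_succ]
  field_simp
  linear_combination 2 * h

lemma auxC_W (k : ℕ) : Real.Wallis.W k * ((2 * k + 1) * auxC k ^ 2) = 1 := by
  induction k with
  | zero => simp [Real.Wallis.W, auxC]
  | succ k ih =>
    have h : auxC (k + 1) = (2 * k + 1) * auxC k / (2 * k + 2) := by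
      rw [← auxC_succ]; field_simp
    refine Eq.trans ?_ ih
    rw [Real.Wallis.W_succ, h]
    push_cast
    have : (2 * (k : ℝ) + 3) ≠ 0 := by positivity
    have : (2 * ((k : ℝ) + 1) + 1) ≠ 0 := by positivity
    field_simp
    ring

/-- For the symmetric nearest-neighbor walk on the nonnegative
integers reflected at the origin (law `P n x = P{S_n = x}` determined by
`P 1 x = δ_{x,1}` and the stated recurrences), with
`E(S_n) = Σ_{x≥0} x·P_n(x)`, we have `lim_{n→∞} E(S_n)/√n = √(2/π)`. -/
theorem stmt_2 (P : ℕ → ℕ → ℝ)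
    (hinit : ∀ x : ℕ, P 1 x = if x = 1 then 1 else 0)
    (h0 : ∀ n : ℕ, 1 ≤ n → P (n + 1) 0 = (1 / 2) * P n 1)
    (h1 : ∀ n : ℕ, 1 ≤ n → P (n + 1) 1 = P n 0 + (1 / 2) * P n 2)
    (hx : ∀ n : ℕ, 1 ≤ n → ∀ x : ℕ, 2 ≤ x →
      P (n + 1) x = (1 / 2) * P n (x - 1) + (1 / 2) * P n (x + 1))
    (E : ℕ → ℝ) (hE : ∀ n : ℕ, E n = ∑' x : ℕ, (x : ℝ) * P n x) :
    Tendsto (fun n : ℕ => E n / Real.sqrt n) atTop (nhds (Real.sqrt (2 / Real.pi))) := by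
  have hF := aux_formula P hinit h0 h1 hx
  have hz : ∀ n, 1 ≤ n → ∀ x, n < x → P n x = 0 := by
    intro n hn x hlt
    rcases Nat.even_or_odd' (n + x) with ⟨m, h | h⟩
    · rw [(hF n hn m x).1 h, Nat.choose_eq_zero_of_lt (by omega)]
      simp
    · exact (hF n hn m x).2 h
  have hfin : ∀ n, 1 ≤ n → ∀ N, n < N → E n = ∑ x ∈ Finset.range N, (x : ℝ) * P n x := by
    intro n hn N hN
    rw [hE]
    apply tsum_eq_sum
    intro x hxN
    rw [hz n hn x (by simp at hxN; omega), mul_zero]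
  have hrec : ∀ n, 1 ≤ n → E (n + 1) = E n + P n 0 := by
    intro n hn
    rw [hfin (n + 1) (by omega) (n + 2) (by omega), hfin n hn (n + 2) (by omega),
      aux_sum (P n) (P (n + 1)) (h1 n hn) (hx n hn) n, hz n hn (n + 2) (by omega),
      hz n hn (n + 1) (by omega)]
    ring
  have hodd : ∀ k, E (2 * k + 2) = E (2 * k + 1) := by
    intro k
    rw [hrec (2 * k + 1) (by omega), (hF (2 * k + 1) (by omega) k 0).2 (by omega), add_zero]
  have hev : ∀ k, P (2 * k + 2) 0 = auxC (k + 1) := by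
    intro k
    rw [(hF (2 * k + 2) (by omega) (k + 1) 0).1 (by ring), auxC, Nat.centralBinom,
      show 2 * (k + 1) = 2 * k + 2 by ring, show (4 : ℝ) = 2 ^ 2 by norm_num, ← pow_mul]
    simp [mul_add]
  have hEc : ∀ k : ℕ, E (2 * k + 1) = (2 * k + 1) * auxC k := by
    intro k
    induction k with
    | zero =>
      rw [hfin (2 * 0 + 1) (by omega) 2 (by omega)]
      simp [Finset.sum_range_succ, hinit, auxC]
    | succ k ih =>
      rw [show 2 * (k + 1) + 1 = (2 * k + 2) + 1 by ring, hrec _ (by omega), hodd, ih, hev,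
        ← auxC_succ]
      push_cast
      ring
  have hEW : ∀ k : ℕ, E (2 * k + 1) = Real.sqrt ((2 * k + 1) / Real.Wallis.W k) := by
    intro k
    have hW := Real.Wallis.W_pos k
    have hc : 0 ≤ auxC k := by unfold auxC; positivity
    rw [hEc]
    symm
    rw [Real.sqrt_eq_iff_mul_self_eq (by positivity) (by positivity),
      div_eq_iff hW.ne']
    linear_combination (-(2 * (k : ℝ) + 1)) * auxC_W k
  have hEn : ∀ n : ℕ, 1 ≤ n → E n / Real.sqrt n =
      Real.sqrt (((2 * ((n - 1) / 2 : ℕ) + 1 : ℝ) / n) / Real.Wallis.W ((n - 1) / 2)) := by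
    intro n hn
    have : E n = E (2 * ((n - 1) / 2) + 1) := by
      rcases Nat.even_or_odd' (n - 1) with ⟨m, h | h⟩
      · congr 1; omega
      · rw [← hodd]; congr 1; omega
    have hW := Real.Wallis.W_pos ((n - 1) / 2)
    rw [this, hEW, ← Real.sqrt_div (by positivity), div_right_comm]
  have hk : Tendsto (fun n : ℕ => (n - 1) / 2) atTop atTop := by
    rw [tendsto_atTop]
    intro b
    filter_upwards [eventually_ge_atTop (2 * b + 1)] with n hn
    omega
  have hr : Tendsto (fun n : ℕ => (2 * ((n - 1) / 2 : ℕ) + 1 : ℝ) / n) atTop (nhds 1) := by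
    have hl : Tendsto (fun n : ℕ => 1 - 1 / (n : ℝ)) atTop (nhds 1) := by
      simpa using tendsto_one_div_atTop_nhds_zero_nat.const_sub (1 : ℝ)
    refine tendsto_of_tendsto_of_tendsto_of_le_of_le' hl tendsto_const_nhds ?_ ?_
    · filter_upwards [eventually_ge_atTop 1] with n hn
      have hn' : (0 : ℝ) < n := by exact_mod_cast hn
      have : (n : ℝ) ≤ 2 * ((n - 1) / 2 : ℕ) + 1 + 1 := by
        exact_mod_cast (by omega : n ≤ 2 * ((n - 1) / 2) + 1 + 1)
      rw [le_div_iff₀ hn', sub_mul, one_div_mul_cancel hn'.ne']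
      linarith
    · filter_upwards [eventually_ge_atTop 1] with n hn
      have hn' : (0 : ℝ) < n := by exact_mod_cast hn
      rw [div_le_one hn']
      exact_mod_cast (by omega : 2 * ((n - 1) / 2) + 1 ≤ n)
  have hmain := (hr.div (Real.Wallis.tendsto_W_nhds_pi_div_two.comp hk)
    (by positivity)).sqrt
  rw [one_div_div] at hmain
  refine hmain.congr' ?_
  filter_upwards [eventually_ge_atTop 1] with n hn
  rw [hEn n hn]
  rfl
end

section
/- For every real λ with 0 < λ < 1 and every integer a ≥ 1, the generating function P(λ,a,a) = Σ_{n≥1} λⁿ P_n(a,a) equals (4/λ)/(θ^{a+1} + θ^{−(a+1)}), where θ = (1 − √(1−λ²))/λ. -/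
/-- Generating function of the joint law, with the summation starting at time one. -/
noncomputable def genFn (P : ℕ → ℤ → ℤ → ℝ) (lam : ℝ) (x a : ℤ) : ℝ :=
  ∑' n : ℕ, lam ^ (n + 1) * P (n + 1) x a

lemma law_bound (P : ℕ → ℤ → ℤ → ℝ)
    (hinit : ∀ x a : ℤ, P 1 x a = (if x = 1 then (1 : ℝ) else 0) * (if a = 1 then (1 : ℝ) else 0))
    (hsupp : ∀ (n : ℕ) (x a : ℤ), ¬(0 ≤ x ∧ x ≤ a) → P n x a = 0)
    (hrec : ∀ (n : ℕ), 1 ≤ n → ∀ (a : ℤ), 1 ≤ a → ∀ (x : ℤ), 0 ≤ x → x ≤ a →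
      P (n + 1) x a
        = (1 / 2) * (1 + (if x = 1 then (1 : ℝ) else 0) - (if x = a + 1 then (1 : ℝ) else 0))
              * P n (x - 1) a
          + (1 / 2) * P n (x + 1) a
          + (1 / 2) * (if x = a then (1 : ℝ) else 0) * (1 - (if a = 1 then (1 : ℝ) else 0))
              * P n (a - 1) (a - 1)) (n : ℕ) :
    ∀ a : ℤ, 1 ≤ a → ∀ x : ℤ, |P (n + 1) x a| ≤ if x = 0 then 1 else 2 := by
  induction n with
  | zero =>
    intro a ha x
    rw [zero_add, hinit]
    split_ifs <;> simp_all
  | succ n ih =>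
    intro a ha x
    by_cases hx : 0 ≤ x ∧ x ≤ a
    swap
    · rw [hsupp _ _ _ hx]; split_ifs <;> simp
    obtain ⟨h0, h1⟩ := hx
    have h := hrec (n + 1) (by omega) a ha x h0 h1
    rw [h, if_neg (show ¬ x = a + 1 by omega)]
    have b1 := ih a ha (x - 1)
    have b2 := ih a ha (x + 1)
    rw [if_neg (show ¬ x + 1 = 0 by omega)] at b2
    by_cases hx0 : x = 0
    · subst hx0
      rw [hsupp (n + 1) (0 - 1) a (by omega), if_neg (show ¬ (0 : ℤ) = a by omega)]
      rw [abs_le] at *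
      simp at *
      constructor <;> linarith
    · rw [if_neg hx0]
      by_cases hxa : x = a
      · subst hxa
        rw [hsupp (n + 1) (x + 1) x (by omega)]
        by_cases hx1 : x = 1
        · subst hx1
          rw [abs_le] at *
          simp at *
          constructor <;> linarith
        · have b3 := ih (x - 1) (by omega) (x - 1)
          rw [if_neg (show ¬ x - 1 = 0 by omega)] at b1 b3
          rw [if_neg hx1]
          rw [abs_le] at *
          simp at *
          constructor <;> linarith
      · rw [if_neg hxa]
        by_cases hx1 : x = 1
        · subst hx1
          rw [abs_le] at *
          simp at *
          constructor <;> linarith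
        · rw [if_neg (show ¬ x - 1 = 0 by omega)] at b1
          rw [if_neg hx1]
          rw [abs_le] at *
          simp at *
          constructor <;> linarith

lemma genFn_step (lam : ℝ) (p A B C : ℕ → ℝ) (c1 c2 c3 : ℝ)
    (h : ∀ n, p (n + 1) = c1 * A n + c2 * B n + c3 * C n)
    (hp : Summable fun n : ℕ => lam ^ (n + 1) * p n)
    (hA : Summable fun n : ℕ => lam ^ (n + 1) * A n)
    (hB : Summable fun n : ℕ => lam ^ (n + 1) * B n)
    (hC : Summable fun n : ℕ => lam ^ (n + 1) * C n) :
    ∑' n : ℕ, lam ^ (n + 1) * p n = lam * p 0 + lam * (c1 * ∑' n : ℕ, lam ^ (n + 1) * A n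
      + c2 * ∑' n : ℕ, lam ^ (n + 1) * B n + c3 * ∑' n : ℕ, lam ^ (n + 1) * C n) := by
  rw [hp.tsum_eq_zero_add]
  have e : HasSum (fun n : ℕ => lam * (c1 * (lam ^ (n + 1) * A n) + c2 * (lam ^ (n + 1) * B n)
      + c3 * (lam ^ (n + 1) * C n))) (lam * (c1 * ∑' n : ℕ, lam ^ (n + 1) * A n
      + c2 * ∑' n : ℕ, lam ^ (n + 1) * B n + c3 * ∑' n : ℕ, lam ^ (n + 1) * C n)) :=
    (((hA.hasSum.mul_left c1).add (hB.hasSum.mul_left c2)).add (hC.hasSum.mul_left c3)).mul_left lam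
  rw [← e.tsum_eq]
  congr 1
  · simp
  · refine tsum_congr fun n => ?_
    rw [h]; ring

/-- For the symmetric reflected walk with running maximum (joint
law `P n x a = P{S_n = x, A_n = a}` as specified), for every `0 < λ < 1` and
every integer `a ≥ 1`, the generating function `P(λ,a,a) = Σ_{n≥1} λⁿ P_n(a,a)`
equals `(4/λ)/(θ^{a+1} + θ^{−(a+1)})` where `θ = (1 − √(1−λ²))/λ`. -/
theorem stmt_5 (P : ℕ → ℤ → ℤ → ℝ)
    (hinit : ∀ x a : ℤ, P 1 x a = (if x = 1 then (1 : ℝ) else 0) * (if a = 1 then (1 : ℝ) else 0))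
    (hsupp : ∀ (n : ℕ) (x a : ℤ), ¬(0 ≤ x ∧ x ≤ a) → P n x a = 0)
    (hrec : ∀ (n : ℕ), 1 ≤ n → ∀ (a : ℤ), 1 ≤ a → ∀ (x : ℤ), 0 ≤ x → x ≤ a →
      P (n + 1) x a
        = (1 / 2) * (1 + (if x = 1 then (1 : ℝ) else 0) - (if x = a + 1 then (1 : ℝ) else 0))
              * P n (x - 1) a
          + (1 / 2) * P n (x + 1) a
          + (1 / 2) * (if x = a then (1 : ℝ) else 0) * (1 - (if a = 1 then (1 : ℝ) else 0))
              * P n (a - 1) (a - 1))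
    (lam : ℝ) (hlam : 0 < lam ∧ lam < 1)
    (θ : ℝ) (hθ : θ = (1 - Real.sqrt (1 - lam ^ 2)) / lam)
    (a : ℕ) (ha : 1 ≤ a) :
    ∑' n : ℕ, lam ^ (n + 1) * P (n + 1) (a : ℤ) (a : ℤ)
      = (4 / lam) / (θ ^ ((a : ℤ) + 1) + θ ^ (-((a : ℤ) + 1))) := by
  obtain ⟨hl0, hl1⟩ := hlam
  have hb := law_bound P hinit hsupp hrec
  have hsum : ∀ b : ℤ, 1 ≤ b → ∀ x : ℤ, Summable fun n : ℕ => lam ^ (n + 1) * P (n + 1) x b := by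
    intro b hb1 x
    have hg : Summable fun n : ℕ => lam ^ n * 2 :=
      (summable_geometric_of_lt_one hl0.le hl1).mul_right 2
    refine Summable.of_norm_bounded ((summable_nat_add_iff 1).2 hg) fun n => ?_
    have h2 : |P (n + 1) x b| ≤ 2 := by
      refine (hb n b hb1 x).trans ?_
      split_ifs <;> norm_num
    rw [norm_mul, Real.norm_eq_abs, Real.norm_eq_abs, abs_of_pos (pow_pos hl0 _)]
    exact mul_le_mul_of_nonneg_left h2 (pow_pos hl0 _).le
  -- equations for the generating function
  have hneg : ∀ x b : ℤ, ¬(0 ≤ x ∧ x ≤ b) → genFn P lam x b = 0 := by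
    intro x b h
    unfold genFn
    simp [hsupp _ x b h]
  have hE : ∀ b : ℤ, 1 ≤ b → ∀ x : ℤ, 0 ≤ x → x < b →
      genFn P lam x b = lam * ((1 / 2) * (1 + (if x = 1 then (1 : ℝ) else 0)) * genFn P lam (x - 1) b
        + (1 / 2) * genFn P lam (x + 1) b) := by
    intro b hb1 x hx0 hxb
    have := genFn_step lam (fun n => P (n + 1) x b) (fun n => P (n + 1) (x - 1) b)
      (fun n => P (n + 1) (x + 1) b) (fun _ => 0)
      ((1 / 2) * (1 + (if x = 1 then (1 : ℝ) else 0))) (1 / 2) 0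
      (fun n => by
        have := hrec (n + 1) (by omega) b hb1 x hx0 hxb.le
        rw [if_neg (show ¬ x = b + 1 by omega), if_neg (show ¬ x = b by omega)] at this
        simp only [this]; ring)
      (hsum b hb1 x) (hsum b hb1 _) (hsum b hb1 _) (by simp)
    have hz : P 1 x b = 0 := by
      rw [hinit]
      split_ifs <;> first | omega | simp
    simp only [zero_add, hz, zero_mul, add_zero, mul_zero] at this
    exact this
  have hT : ∀ b : ℤ, 2 ≤ b →
      genFn P lam b b = lam * ((1 / 2) * genFn P lam (b - 1) b
        + (1 / 2) * genFn P lam (b - 1) (b - 1)) := by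
    intro b hb1
    have := genFn_step lam (fun n => P (n + 1) b b) (fun n => P (n + 1) (b - 1) b)
      (fun _ => 0) (fun n => P (n + 1) (b - 1) (b - 1))
      (1 / 2) 0 (1 / 2)
      (fun n => by
        have := hrec (n + 1) (by omega) b (by omega) b (by omega) le_rfl
        rw [if_neg (show ¬ b = b + 1 by omega), if_neg (show ¬ b = 1 by omega), if_pos rfl,
          hsupp _ (b + 1) b (by omega)] at this
        simp only [this]; ring)
      (hsum b (by omega) b) (hsum b (by omega) _) (by simp) (hsum (b - 1) (by omega) _)
    have hz : P 1 b b = 0 := by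
      rw [hinit]
      split_ifs <;> first | omega | simp
    simp only [zero_add, hz, zero_mul, add_zero, mul_zero] at this
    exact this
  have hT1 : genFn P lam 1 1 = lam + lam * genFn P lam 0 1 := by
    have := genFn_step lam (fun n => P (n + 1) 1 1) (fun n => P (n + 1) 0 1)
      (fun _ => 0) (fun _ => 0)
      1 0 0
      (fun n => by
        have := hrec (n + 1) (by omega) 1 (by omega) 1 (by omega) le_rfl
        rw [hsupp _ (1 + 1) 1 (by omega)] at this
        simp at this
        simp only [this]; ring)
      (hsum 1 (by omega) 1) (hsum 1 (by omega) _) (by simp) (by simp)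
    have hz : P 1 1 1 = 1 := by
      rw [hinit]
      simp
    simp only [zero_add, hz, zero_mul, add_zero, mul_one, one_mul] at this
    exact this
  -- facts about θ
  have hs0 : 0 < 1 - lam ^ 2 := by nlinarith
  have hsq := Real.sq_sqrt hs0.le
  have hsn := Real.sqrt_nonneg (1 - lam ^ 2)
  have hs1 : Real.sqrt (1 - lam ^ 2) < 1 := by
    nlinarith [pow_pos hl0 2]
  have hθ0 : 0 < θ := by
    rw [hθ]; exact div_pos (by linarith) hl0
  have hq : lam * (θ ^ 2 + 1) = 2 * θ := by
    rw [hθ]; field_simp; nlinarith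
  have hsumθ : θ + θ⁻¹ = 2 / lam := by
    field_simp; linarith
  set u : ℕ → ℝ := fun k => θ ^ k + (θ⁻¹) ^ k with hu
  have hupos : ∀ k, 0 < u k := fun k => by
    have := inv_pos.2 hθ0
    simp only [hu]; positivity
  have hurec : ∀ k, u (k + 2) = 2 / lam * u (k + 1) - u k := by
    intro k
    have h1 : θ * θ⁻¹ = 1 := mul_inv_cancel₀ hθ0.ne'
    rw [← hsumθ]
    simp only [hu]
    linear_combination (-θ ^ k - (θ⁻¹) ^ k) * h1
  have hu0 : u 0 = 2 := by simp [hu]; norm_num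
  have hu1 : u 1 = 2 / lam := by simp [hu, hsumθ]
  have hG : ∀ b : ℕ, ∀ k : ℕ, k + 1 ≤ b →
      genFn P lam ((k : ℤ) + 1) b = genFn P lam 0 b * u (k + 1) := by
    intro b k
    induction k using Nat.strong_induction_on with
    | _ k ih =>
      intro hk
      match k, ih, hk with
      | 0, _, hk =>
        have := hE b (by omega) 0 le_rfl (by omega)
        rw [hneg (0 - 1) b (by omega)] at this
        simp at this
        rw [zero_add, hu1]
        simp only [Nat.cast_zero, zero_add]
        field_simp
        linarith
      | 1, ih, hk =>
        have i0 := ih 0 (by omega) (by omega)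
        have := hE b (by omega) 1 (by omega) (by omega)
        rw [show (1 : ℤ) - 1 = 0 by norm_num] at this
        simp only [Nat.cast_zero, zero_add, Nat.cast_one, if_true] at *
        rw [hurec 0, hu0, zero_add]
        rw [i0] at this
        field_simp
        linear_combination (-2) * this
      | k + 2, ih, hk =>
        have i0 := ih k (by omega) (by omega)
        have i1 := ih (k + 1) (by omega) (by omega)
        have := hE b (by omega) ((k : ℤ) + 2) (by omega) (by omega)
        rw [if_neg (by omega), show (k : ℤ) + 2 - 1 = k + 1 by ring] at this
        push_cast at *
        rw [show (k : ℤ) + 1 + 1 = k + 2 by ring] at i1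
        rw [hurec (k + 1)]
        rw [i0, i1] at this
        rw [show (k : ℤ) + 2 + 1 = k + 2 + 1 by ring]
        field_simp
        linarith
  have hmain : ∀ k : ℕ, genFn P lam ((k + 1 : ℕ) : ℤ) ((k + 1 : ℕ) : ℤ) = (4 / lam) / u (k + 2) := by
    intro k
    induction k with
    | zero =>
      have h1 := hG 1 0 le_rfl
      have hp := hupos 2
      have e := hurec 0
      simp only [zero_add, Nat.cast_zero, Nat.cast_one] at *
      rw [eq_div_iff hp.ne', e, hu0, hu1]
      rw [hu1] at h1
      rw [h1] at hT1 ⊢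
      field_simp at hT1 ⊢
      linear_combination 4 * hT1
    | succ k ih =>
      have h1 := hG (k + 2) (k + 1) le_rfl
      have h0 := hG (k + 2) k (by omega)
      have ht := hT ((k + 2 : ℕ) : ℤ) (by omega)
      have e := hurec (k + 1)
      have hp := hupos (k + 2)
      have hp' := hupos (k + 1 + 2)
      rw [show ((k + 2 : ℕ) : ℤ) - 1 = ((k + 1 : ℕ) : ℤ) by push_cast; ring, ih] at ht
      rw [show ((k + 1 : ℕ) : ℤ) + 1 = ((k + 2 : ℕ) : ℤ) by push_cast; ring] at h1
      rw [show (k : ℤ) + 1 = ((k + 1 : ℕ) : ℤ) by push_cast; ring] at h0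
      rw [h0, h1] at ht
      rw [show k + 1 + 1 = k + 2 from rfl] at *
      rw [h1]
      generalize genFn P lam 0 ((k + 2 : ℕ) : ℤ) = g at *
      have hlu : lam * u (k + 1 + 2) = 2 * u (k + 2) - lam * u (k + 1) := by
        rw [e]; field_simp
      rw [eq_div_iff hp'.ne']
      field_simp at ht ⊢
      linear_combination g * u (k + 2) * hlu + ht
  obtain ⟨k, rfl⟩ : ∃ k, a = k + 1 := ⟨a - 1, by omega⟩
  have := hmain k
  unfold genFn at this
  rw [this]
  congr 1
  simp only [hu]
  rw [zpow_neg, show ((k + 1 : ℕ) : ℤ) + 1 = ((k + 2 : ℕ) : ℤ) by push_cast; ring, zpow_natCast,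
    inv_pow]
end

section
/- Generalized Abel limit theorem: let p ≥ 0 be a real number, (a_n)_{n≥1} a real sequence, and C a real number such that a_n/n^{p} → C as n → ∞. Then lim_{λ→1⁻} (1−λ)^{1+p} Σ_{n≥1} a_n λⁿ = C·Γ(p+1). -/
open Filter

/-- Abelian comparison lemma. -/
theorem abel_aux (s : ℝ) (hs : 0 < s) (a b : ℕ → ℝ) (L : ℝ) (hb : ∀ n, 0 < b n)
    (hsum : ∀ x : ℝ, x ∈ Set.Ioo (0 : ℝ) 1 → HasSum (fun n => b n * x ^ n) (1 / (1 - x) ^ s))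
    (h : Tendsto (fun n => a n / b n) atTop (nhds L)) :
    Tendsto (fun x : ℝ => (1 - x) ^ s * ∑' n : ℕ, a (n + 1) * x ^ (n + 1))
      (nhdsWithin 1 (Set.Ioo 0 1)) (nhds L) := by
  have hz : Tendsto (fun x : ℝ => (1 - x) ^ s) (nhdsWithin 1 (Set.Ioo 0 1)) (nhds 0) := by
    have hc : Continuous (fun x : ℝ => (1 - x) ^ s) :=
      (continuous_const.sub continuous_id).rpow_const (fun _ => Or.inr hs.le)
    have h1 := hc.tendsto 1
    simp only [sub_self, Real.zero_rpow hs.ne'] at h1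
    exact h1.mono_left nhdsWithin_le_nhds
  rw [Metric.tendsto_nhds]
  intro ε hε
  obtain ⟨N, hN⟩ := (Metric.tendsto_atTop.1 h) (ε / 2) (half_pos hε)
  have hd : ∀ n, N ≤ n → |a n - L * b n| ≤ ε / 2 * b n := by
    intro n hn
    have h1 := (hN n hn).le
    rw [Real.dist_eq] at h1
    have h2 : a n - L * b n = (a n / b n - L) * b n := by
      have := (hb n).ne'
      field_simp
    rw [h2, abs_mul, abs_of_pos (hb n)]
    exact mul_le_mul_of_nonneg_right h1 (hb n).le
  set K : ℝ := ∑ n ∈ Finset.range N, |a n - L * b n| with hK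
  have hz2 : Tendsto (fun x : ℝ => (1 - x) ^ s * (K + |a 0|)) (nhdsWithin 1 (Set.Ioo 0 1))
      (nhds 0) := by
    simpa using hz.mul_const (K + |a 0|)
  have hev := hz2.eventually (gt_mem_nhds (half_pos hε))
  filter_upwards [hev, self_mem_nhdsWithin] with x hx hxI
  have hx0 : 0 < x := hxI.1
  have hx1 : x < 1 := hxI.2
  have hS := hsum x hxI
  have hp : 0 < (1 - x) ^ s := Real.rpow_pos_of_pos (by linarith) s
  let e : ℕ → ℝ := fun n => if n ∈ Finset.range N then |a n - L * b n| else 0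
  have he : HasSum e K := by
    have h1 : HasSum e (∑ n ∈ Finset.range N, e n) :=
      hasSum_sum_of_ne_finset_zero (fun n hn => by simp only [e, if_neg hn])
    have h2 : ∑ n ∈ Finset.range N, e n = K :=
      Finset.sum_congr rfl (fun n hn => by simp only [e, if_pos hn])
    rwa [h2] at h1
  have hmaj := (hS.mul_left (ε / 2)).add he
  have hle : ∀ n, ‖(a n - L * b n) * x ^ n‖ ≤ ε / 2 * (b n * x ^ n) + e n := by
    intro n
    have hxn : 0 < x ^ n := pow_pos hx0 n
    have hxn1 : x ^ n ≤ 1 := pow_le_one₀ hx0.le hx1.le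
    rw [Real.norm_eq_abs, abs_mul, abs_of_pos hxn]
    by_cases hn : n < N
    · simp only [e, if_pos (Finset.mem_range.2 hn)]
      have h1 : |a n - L * b n| * x ^ n ≤ |a n - L * b n| * 1 :=
        mul_le_mul_of_nonneg_left hxn1 (abs_nonneg _)
      have h2 : 0 ≤ ε / 2 * (b n * x ^ n) := by have := hb n; positivity
      linarith
    · simp only [e, if_neg (fun h => hn (Finset.mem_range.1 h))]
      have := mul_le_mul_of_nonneg_right (hd n (not_lt.1 hn)) hxn.le
      linarith
  have hds : Summable (fun n => (a n - L * b n) * x ^ n) :=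
    Summable.of_norm_bounded hmaj.summable hle
  have hbound : ‖∑' n, (a n - L * b n) * x ^ n‖ ≤ ε / 2 * (1 / (1 - x) ^ s) + K :=
    tsum_of_norm_bounded hmaj hle
  have hA : HasSum (fun n => a n * x ^ n)
      ((∑' n, (a n - L * b n) * x ^ n) + L * (1 / (1 - x) ^ s)) := by
    convert hds.hasSum.add (hS.mul_left L) using 2
    ring
  have hshift := hA.summable.tsum_eq_zero_add
  rw [hA.tsum_eq] at hshift
  simp only [pow_zero, mul_one] at hshift
  set D := ∑' n, (a n - L * b n) * x ^ n
  set T := ∑' n : ℕ, a (n + 1) * x ^ (n + 1)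
  set P := (1 - x) ^ s
  have hT : P * T - L = P * (D - a 0) := by
    have : T = D + L * (1 / P) - a 0 := by linarith
    rw [this]
    field_simp
    ring
  rw [Real.dist_eq, hT, abs_mul, abs_of_pos hp]
  rw [Real.norm_eq_abs] at hbound
  have h1 : |D - a 0| ≤ ε / 2 * (1 / P) + K + |a 0| := by
    have := abs_sub D (a 0)
    linarith
  have h2 : P * |D - a 0| ≤ P * (ε / 2 * (1 / P) + K + |a 0|) :=
    mul_le_mul_of_nonneg_left h1 hp.le
  have h3 : P * (ε / 2 * (1 / P) + K + |a 0|) = ε / 2 + P * (K + |a 0|) := by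
    field_simp
    ring
  linarith

theorem choose_formula (r : ℝ) (n : ℕ) :
    Ring.choose (r + n - 1) n = (∏ j ∈ Finset.range n, (r + j)) / n.factorial := by
  rw [← Ring.multichoose_eq, eq_div_iff (by positivity)]
  have h := Ring.factorial_nsmul_multichoose_eq_ascPochhammer r n
  rw [Polynomial.ascPochhammer_smeval_eq_eval, nsmul_eq_mul] at h
  rw [mul_comm, h]
  clear h
  induction n with
  | zero => simp
  | succ n ih => rw [ascPochhammer_succ_eval, ih, Finset.prod_range_succ]

/-- generalized Abel limit theorem: let `p ≥ 0` be real,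
`(a_n)_{n≥1}` a real sequence and `C` a real number with `a_n/n^p → C` as
`n → ∞`. Then `lim_{λ→1⁻} (1−λ)^{1+p} Σ_{n≥1} a_n λⁿ = C·Γ(p+1)`. -/
theorem stmt_10 (p : ℝ) (hp : 0 ≤ p) (a : ℕ → ℝ) (C : ℝ)
    (h : Tendsto (fun n : ℕ => a n / (n : ℝ) ^ p) atTop (nhds C)) :
    Tendsto (fun lam : ℝ => (1 - lam) ^ (1 + p) * ∑' n : ℕ, a (n + 1) * lam ^ (n + 1))
      (nhdsWithin 1 (Set.Ioo 0 1)) (nhds (C * Real.Gamma (p + 1))) := by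
  have hP : ∀ n : ℕ, 0 < ∏ j ∈ Finset.range n, (1 + p + (j : ℝ)) :=
    fun n => Finset.prod_pos (fun j _ => by positivity)
  refine abel_aux (1 + p) (by linarith) a
    (fun n => (∏ j ∈ Finset.range n, (1 + p + (j : ℝ))) / n.factorial) _ ?_ ?_ ?_
  · intro n
    have := hP n
    positivity
  · intro x hx
    have h1 := (Real.one_div_one_sub_rpow_hasFPowerSeriesOnBall_zero (1 + p)).hasSum
      (y := x) (by
        rw [Metric.mem_eball, edist_zero_right]
        simp only [Real.enorm_eq_ofReal hx.1.le]
        exact ENNReal.ofReal_lt_one.2 hx.2)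
    simp only [zero_add] at h1
    have h2 : (fun n : ℕ => (∏ j ∈ Finset.range n, (1 + p + (j : ℝ))) / n.factorial * x ^ n) =
        fun n => (FormalMultilinearSeries.ofScalars ℝ
          (fun n : ℕ => Ring.choose (1 + p + (n : ℝ) - 1) n) n) fun _ => x := by
      funext n
      rw [← choose_formula]
      simp [FormalMultilinearSeries.ofScalars, mul_comm]
    rw [h2]
    exact h1
  · have hG := Real.GammaSeq_tendsto_Gamma (1 + p)
    have hq : Tendsto (fun n : ℕ => 1 + (1 + p) / (n : ℝ)) atTop (nhds 1) := by
      simpa using (tendsto_const_div_atTop_nhds_zero_nat (1 + p)).const_add 1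
    have h3 := h.mul (hG.mul hq)
    rw [mul_one, add_comm 1 p] at h3
    refine h3.congr' ?_
    filter_upwards [eventually_gt_atTop 0] with n hn
    have hn' : (0 : ℝ) < n := by exact_mod_cast hn
    have hnp : 0 < (n : ℝ) ^ p := Real.rpow_pos_of_pos hn' p
    have h4 := hP n
    have h5 : (0 : ℝ) < 1 + p + n := by positivity
    simp only [Real.GammaSeq, add_comm p 1]
    rw [Finset.prod_range_succ, Real.rpow_add hn', Real.rpow_one]
    field_simp
    ring
end

section
/- For every integer k ≥ 1, lim_{t→0⁺} t^{k} Σ_{a≥1} C(a,k−1)/cosh(a t) = (1/(k−1)!) ∫_0^∞ b^{k−1}/cosh(b) db, where C(a,k−1) is the binomial coefficient. -/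
open Filter

lemma aux_bound (m : ℕ) (t b : ℝ) (ht : 0 < t) (ht1 : t ≤ 1) (hb : 0 < b) :
    ‖t ^ m * ((Nat.choose ⌈b / t⌉₊ m : ℝ) / Real.cosh ((⌈b / t⌉₊ : ℝ) * t))‖ ≤
      (2 * (2 ^ m * (m.factorial : ℝ) * Real.exp (1/2))) * Real.exp (-(1/2) * b) := by
  have hbt : 0 < b / t := div_pos hb ht
  set n := ⌈b / t⌉₊ with hn
  have h1 : b ≤ (n : ℝ) * t := by
    have := Nat.le_ceil (b / t)
    rwa [div_le_iff₀ ht] at this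
  have h2 : (n : ℝ) * t ≤ b + 1 := by
    have := (Nat.ceil_lt_add_one hbt.le).le
    have h3 : (n : ℝ) * t ≤ (b / t + 1) * t := mul_le_mul_of_nonneg_right this ht.le
    have h4 : (b / t + 1) * t = b + t := by field_simp
    linarith
  have hc : (Nat.choose n m : ℝ) ≤ (n : ℝ) ^ m := by
    exact_mod_cast Nat.choose_le_pow n m
  have hcosh : Real.exp b / 2 ≤ Real.cosh ((n : ℝ) * t) := by
    rw [Real.cosh_eq]
    have := Real.exp_le_exp.mpr h1
    have := Real.exp_pos (-((n : ℝ) * t))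
    linarith
  have hp : (b + 1) ^ m ≤ 2 ^ m * (m.factorial : ℝ) * Real.exp ((b + 1) / 2) := by
    have := Real.pow_div_factorial_le_exp ((b + 1) / 2) (by linarith) m
    rw [div_le_iff₀ (by positivity), div_pow, div_le_iff₀ (by positivity)] at this
    linarith
  rw [Real.norm_of_nonneg (by have := Real.cosh_pos ((n : ℝ) * t); positivity), ← mul_div_assoc]
  have hnum : t ^ m * (Nat.choose n m : ℝ) ≤ 2 ^ m * (m.factorial : ℝ) * Real.exp ((b + 1) / 2) := by
    calc t ^ m * (Nat.choose n m : ℝ) ≤ t ^ m * (n : ℝ) ^ m := by gcongr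
      _ = ((n : ℝ) * t) ^ m := by rw [mul_pow]; ring
      _ ≤ (b + 1) ^ m := by gcongr
      _ ≤ _ := hp
  calc _ ≤ (2 ^ m * (m.factorial : ℝ) * Real.exp ((b + 1) / 2)) / (Real.exp b / 2) := by
        gcongr
    _ = _ := by
        have e1 : Real.exp ((b + 1) / 2) = Real.exp (1/2) * Real.exp (-(1/2) * b) * Real.exp b := by
          rw [← Real.exp_add, ← Real.exp_add]; congr 1; ring
        rw [e1]
        have := Real.exp_pos b
        field_simp

lemma aux_meas (m : ℕ) (t : ℝ) :
    Measurable (fun b : ℝ => t ^ m * ((Nat.choose ⌈b / t⌉₊ m : ℝ) / Real.cosh ((⌈b / t⌉₊ : ℝ) * t))) := by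
  have : Measurable (fun n : ℕ => t ^ m * ((Nat.choose n m : ℝ) / Real.cosh ((n : ℝ) * t))) :=
    measurable_from_top
  exact this.comp (Nat.measurable_ceil.comp (measurable_id.div_const t))

lemma aux_boundint (K : ℝ) : MeasureTheory.IntegrableOn
    (fun b : ℝ => K * Real.exp (-(1/2) * b)) (Set.Ioi 0) :=
  (exp_neg_integrableOn_Ioi 0 (by norm_num : (0:ℝ) < 1/2)).const_mul K

lemma aux_sum_s11 (m : ℕ) (t : ℝ) (ht : 0 < t) (ht1 : t ≤ 1) :
    ∫ b in Set.Ioi (0:ℝ), t ^ m * ((Nat.choose ⌈b / t⌉₊ m : ℝ) / Real.cosh ((⌈b / t⌉₊ : ℝ) * t)) =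
    t ^ (m + 1) * ∑' a : ℕ, (Nat.choose (a + 1) m : ℝ) / Real.cosh (((a : ℝ) + 1) * t) := by
  have hceil : ∀ n : ℕ, ∀ b ∈ Set.Ioc ((n : ℝ) * t) (((n : ℝ) + 1) * t), ⌈b / t⌉₊ = n + 1 := by
    intro n b hb
    rw [Nat.ceil_eq_iff (by omega)]
    simp only [Nat.add_sub_cancel, lt_div_iff₀ ht, div_le_iff₀ ht]
    push_cast
    exact hb
  have hU : (⋃ n : ℕ, Set.Ioc ((n : ℝ) * t) (((n : ℝ) + 1) * t)) = Set.Ioi 0 := by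
    ext b
    simp only [Set.mem_iUnion, Set.mem_Ioi]
    constructor
    · rintro ⟨n, h, -⟩
      have : 0 ≤ (n : ℝ) * t := by positivity
      linarith
    · intro hb
      have hpos : 0 < ⌈b / t⌉₊ := Nat.ceil_pos.mpr (div_pos hb ht)
      obtain ⟨n, hn⟩ := Nat.exists_eq_succ_of_ne_zero hpos.ne'
      refine ⟨n, ?_⟩
      rw [Nat.ceil_eq_iff (by omega)] at hn
      simp only [Nat.succ_eq_add_one, Nat.add_sub_cancel, lt_div_iff₀ ht, div_le_iff₀ ht] at hn
      push_cast at hn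
      exact hn
  have hint : MeasureTheory.IntegrableOn (fun b : ℝ => t ^ m * ((Nat.choose ⌈b / t⌉₊ m : ℝ) / Real.cosh ((⌈b / t⌉₊ : ℝ) * t))) (Set.Ioi 0) := by
    refine MeasureTheory.Integrable.mono' (aux_boundint (2 * (2 ^ m * (m.factorial : ℝ) * Real.exp (1/2)))) (aux_meas m t).aestronglyMeasurable ?_
    refine (MeasureTheory.ae_restrict_iff' measurableSet_Ioi).mpr (Eventually.of_forall ?_)
    intro b hb
    exact aux_bound m t b ht ht1 hb
  rw [← hU] at hint ⊢
  rw [MeasureTheory.integral_iUnion (fun n => measurableSet_Ioc) ?_ hint, ← tsum_mul_left]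
  · congr 1
    ext n
    rw [MeasureTheory.setIntegral_congr_fun (g := fun _ => t ^ m * ((Nat.choose (n+1) m : ℝ) / Real.cosh (((n:ℝ)+1) * t))) measurableSet_Ioc ?_]
    · rw [MeasureTheory.setIntegral_const, MeasureTheory.measureReal_def, Real.volume_Ioc, ENNReal.toReal_ofReal (by nlinarith)]
      simp only [smul_eq_mul]
      ring
    · intro b hb
      simp only [hceil n b hb]
      push_cast
      rfl
  · intro i j hij
    rw [Function.onFun, Set.disjoint_left]
    intro b hi hj
    have := hceil i b hi
    have := hceil j b hj
    omega

lemma aux_lim (m : ℕ) (b : ℝ) (hb : 0 < b) :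
    Tendsto (fun t : ℝ => t ^ m * ((Nat.choose ⌈b / t⌉₊ m : ℝ) / Real.cosh ((⌈b / t⌉₊ : ℝ) * t)))
      (nhdsWithin 0 (Set.Ioi 0)) (nhds ((1 / (m.factorial : ℝ)) * (b ^ m / Real.cosh b))) := by
  have h1 : Tendsto (fun t : ℝ => (⌈b / t⌉₊ : ℝ) * t) (nhdsWithin 0 (Set.Ioi 0)) (nhds b) := by
    have := (tendsto_nat_ceil_mul_div_atTop (R := ℝ) hb.le).comp tendsto_inv_nhdsGT_zero
    simpa [Function.comp_def, div_eq_mul_inv] using this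
  have h2 : Tendsto (fun t : ℝ => ⌈b / t⌉₊) (nhdsWithin 0 (Set.Ioi 0)) atTop := by
    have := (tendsto_nat_ceil_atTop (α := ℝ)).comp (tendsto_inv_nhdsGT_zero.const_mul_atTop hb)
    simpa [Function.comp_def, div_eq_mul_inv] using this
  have h3 : Tendsto (fun n : ℕ => (n.choose m : ℝ) / (n:ℝ)^m) atTop (nhds (1 / (m.factorial : ℝ))) := by
    have hz : ∀ᶠ n : ℕ in atTop, (n:ℝ)^m / m.factorial ≠ 0 := by
      filter_upwards [eventually_gt_atTop 0] with n hn
      positivity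
    have := ((Asymptotics.isEquivalent_iff_tendsto_one hz).mp (isEquivalent_choose m)).mul_const (1 / (m.factorial : ℝ))
    rw [one_mul] at this
    refine this.congr' ?_
    filter_upwards [eventually_gt_atTop 0] with n hn
    simp only [Pi.div_apply]
    have : (m.factorial : ℝ) ≠ 0 := by positivity
    have : (n : ℝ) ≠ 0 := by positivity
    field_simp
  have h4 := (h3.comp h2).mul ((h1.pow m).div ((Real.continuous_cosh.tendsto b).comp h1) (Real.cosh_pos b).ne')
  refine h4.congr' ?_
  filter_upwards [h2.eventually (eventually_gt_atTop 0)] with t hn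
  simp only [Function.comp_def, Pi.div_apply, mul_pow]
  have : ((⌈b / t⌉₊ : ℕ) : ℝ) ≠ 0 := by positivity
  have := (Real.cosh_pos ((⌈b / t⌉₊ : ℝ) * t)).ne'
  field_simp

/-- for every integer `k ≥ 1`,
`lim_{t→0⁺} t^k Σ_{a≥1} C(a,k−1)/cosh(a t) = (1/(k−1)!) ∫_0^∞ b^{k−1}/cosh b db`. -/
theorem stmt_11 (k : ℕ) (hk : 1 ≤ k) :
    Tendsto
      (fun t : ℝ => t ^ k * ∑' a : ℕ, (Nat.choose (a + 1) (k - 1) : ℝ) / Real.cosh (((a : ℝ) + 1) * t))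
      (nhdsWithin 0 (Set.Ioi 0))
      (nhds ((1 / (Nat.factorial (k - 1) : ℝ)) * ∫ b in Set.Ioi (0 : ℝ), b ^ (k - 1) / Real.cosh b)) := by
  obtain ⟨m, rfl⟩ : ∃ m, k = m + 1 := ⟨k - 1, by omega⟩
  simp only [Nat.add_sub_cancel]
  rw [← MeasureTheory.integral_const_mul]
  have hev : ∀ᶠ t : ℝ in nhdsWithin 0 (Set.Ioi 0), 0 < t ∧ t ≤ 1 := by
    filter_upwards [Ioc_mem_nhdsGT (zero_lt_one (α := ℝ))] with t ht using ht
  have key := MeasureTheory.tendsto_integral_filter_of_dominated_convergence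
    (μ := MeasureTheory.volume.restrict (Set.Ioi (0:ℝ))) (l := nhdsWithin (0:ℝ) (Set.Ioi 0))
    (F := fun (t b : ℝ) => t ^ m * ((Nat.choose ⌈b / t⌉₊ m : ℝ) / Real.cosh ((⌈b / t⌉₊ : ℝ) * t)))
    (f := fun b => (1 / (m.factorial : ℝ)) * (b ^ m / Real.cosh b))
    (fun b => (2 * (2 ^ m * (m.factorial : ℝ) * Real.exp (1/2))) * Real.exp (-(1/2) * b))
    (Eventually.of_forall fun t => (aux_meas m t).aestronglyMeasurable)
    (by
      filter_upwards [hev] with t ht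
      refine (MeasureTheory.ae_restrict_iff' measurableSet_Ioi).mpr (Eventually.of_forall ?_)
      intro b hb
      exact aux_bound m t b ht.1 ht.2 hb)
    (aux_boundint _)
    ((MeasureTheory.ae_restrict_iff' measurableSet_Ioi).mpr (Eventually.of_forall
      fun b hb => aux_lim m b hb))
  refine key.congr' ?_
  filter_upwards [hev] with t ht
  exact aux_sum_s11 m t ht.1 ht.2
end
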